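/- Let c > 0 and α ∈ (0,1), set q_n = 1 − c/n^α, and let (M_n^*) be a sequence of integers with 1 ≤ M_n^* ≤ n−1 such that lim_{n→∞} (n − M_n^*)/n^α = 1/c. Then lim_{n→∞} 𝒫_n^{q_n}(S(n,M_n^*)) = 1/e; moreover, for any sequence (M_n) of integers with 0 ≤ M_n ≤ n−1, limsup_{n→∞} 𝒫_n^{q_n}(S(n,M_n)) ≤ 1/e. -/

import Mathlib

open Finset Filter

/-- The number of inversions of a permutation of `Fin n`. -/
def invCount (n : ℕ) (σ : Equiv.Perm (Fin n)) : ℕ :=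
  (Finset.univ.filter (fun p : Fin n × Fin n => p.1 < p.2 ∧ σ p.2 < σ p.1)).card

/-- Normalization constant of the Mallows distribution:
`Z_n(q) = ∑_{σ ∈ S_n} q^{inv σ}`. -/
noncomputable def mallowsZ (n : ℕ) (q : ℝ) : ℝ :=
  ∑ σ : Equiv.Perm (Fin n), q ^ invCount n σ

/-- The Mallows probability of a set `A` of permutations:
`P_n^q(A) = (∑_{σ ∈ A} q^{inv σ}) / Z_n(q)`. -/
noncomputable def mallowsProb (n : ℕ) (q : ℝ) (A : Finset (Equiv.Perm (Fin n))) : ℝ :=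
  (∑ σ ∈ A, q ^ invCount n σ) / mallowsZ n q

/-- The success event for the strategy `S(n,M)`.  Positions are indexed by `Fin n`
(the index `i : Fin n` represents the `(i+1)`-st arriving item) and ranks are the
values of `σ` (the value `n-1`, i.e. the top of `Fin n`, represents the highest
rank `n`).  For `M ≥ 1` the strategy succeeds iff for some position `j` with
`(j:ℕ) ≥ M` (i.e. item number `j+1 ≥ M+1`) the item at position `j` has the top
rank and the maximum rank among the items strictly before position `j` equals the
maximum rank among the first `M` items.  For `M = 0` it succeeds iff the first
item has top rank. -/
def winEvent (n M : ℕ) : Finset (Equiv.Perm (Fin n)) :=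
  if M = 0 then
    Finset.univ.filter (fun σ => ∀ i : Fin n, (i : ℕ) = 0 → (σ i : ℕ) = n - 1)
  else
    Finset.univ.filter (fun σ => ∃ j : Fin n, M ≤ (j : ℕ) ∧ (σ j : ℕ) = n - 1 ∧
      (Finset.univ.filter (fun i : Fin n => i < j)).sup (fun i => (σ i : ℕ)) =
      (Finset.univ.filter (fun i : Fin n => (i : ℕ) < M)).sup (fun i => (σ i : ℕ)))

/-- `𝒫_n^q(S(n,M))`, the success probability of the strategy `S(n,M)` under the
Mallows distribution with parameter `q`. -/
noncomputable def succProb (n M : ℕ) (q : ℝ) : ℝ := mallowsProb n q (winEvent n M)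


noncomputable def insP {n : ℕ} (v : Fin (n+1)) (τ : Equiv.Perm (Fin n)) : Equiv.Perm (Fin (n+1)) :=
  ((finSuccEquiv' (Fin.last n)).trans (Equiv.optionCongr τ)).trans (finSuccEquiv' v).symm

theorem insP_last {n : ℕ} (v : Fin (n+1)) (τ : Equiv.Perm (Fin n)) : insP v τ (Fin.last n) = v := by
  simp [insP]

theorem insP_castSucc {n : ℕ} (v : Fin (n+1)) (τ : Equiv.Perm (Fin n)) (i : Fin n) :
    insP v τ i.castSucc = v.succAbove (τ i) := by
  have : finSuccEquiv' (Fin.last n) i.castSucc = some i := by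
    rw [← Fin.succAbove_last_apply, finSuccEquiv'_succAbove]
  simp only [insP, Equiv.trans_apply, this]
  simp

theorem insP_bij (n : ℕ) :
    Function.Bijective (fun p : Fin (n+1) × Equiv.Perm (Fin n) => insP p.1 p.2) := by
  rw [Fintype.bijective_iff_injective_and_card]
  constructor
  · rintro ⟨v, τ⟩ ⟨w, ρ⟩ h
    simp only at h
    have h1 : v = w := by rw [← insP_last v τ, h, insP_last]
    subst h1
    have h2 : τ = ρ := by
      ext i
      have := insP_castSucc v τ i
      rw [h, insP_castSucc] at this
      rw [Fin.succAbove_right_injective this]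
    rw [h2]
  · simp [Fintype.card_perm, Nat.factorial_succ]

theorem sum_insP {n : ℕ} (F : Equiv.Perm (Fin (n+1)) → ℝ) :
    ∑ σ, F σ = ∑ v : Fin (n+1), ∑ τ : Equiv.Perm (Fin n), F (insP v τ) := by
  rw [← Fintype.sum_prod_type']
  exact ((insP_bij n).sum_comp F).symm

theorem invCount_eq (n : ℕ) (σ : Equiv.Perm (Fin n)) :
    invCount n σ = ∑ j : Fin n, ∑ i : Fin n, if i < j ∧ σ j < σ i then 1 else 0 := by
  rw [invCount, Finset.card_filter, Fintype.sum_prod_type, Finset.sum_comm]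

theorem card_aux (n : ℕ) (v : Fin (n+1)) :
    (∑ k : Fin n, if v < v.succAbove k then 1 else 0) = n - (v : ℕ) := by
  have : ∀ k : Fin n, (if v < v.succAbove k then 1 else 0) = if (v : ℕ) ≤ (k : ℕ) then 1 else 0 := by
    intro k
    simp only [Fin.lt_succAbove_iff_le_castSucc, Fin.le_def, Fin.val_castSucc]
  simp only [this]
  rw [Fin.sum_univ_eq_sum_range (fun k => if (v : ℕ) ≤ k then 1 else 0) n, ← Finset.card_filter]
  have : (Finset.range n).filter (fun k => (v : ℕ) ≤ k) = Finset.Ico (v : ℕ) n := by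
    ext k; simp; omega
  rw [this, Nat.card_Ico]

theorem invCount_insP {n : ℕ} (v : Fin (n+1)) (τ : Equiv.Perm (Fin n)) :
    invCount (n+1) (insP v τ) = invCount n τ + (n - (v : ℕ)) := by
  rw [invCount_eq, invCount_eq, Fin.sum_univ_castSucc]
  congr 1
  · refine Finset.sum_congr rfl fun j _ => ?_
    rw [Fin.sum_univ_castSucc]
    simp [insP_castSucc, insP_last, Fin.castSucc_lt_last, Fin.succAbove_lt_succAbove_iff]
    intro h
    exact absurd h (not_lt.mpr (Fin.le_last _))
  · rw [Fin.sum_univ_castSucc]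
    simp only [insP_castSucc, insP_last, lt_self_iff_false, and_self, if_false, add_zero,
      Fin.castSucc_lt_last, true_and]
    rw [Equiv.sum_comp τ (fun k => if v < v.succAbove k then 1 else 0)]
    exact card_aux n v

/-- q-analogue -/
noncomputable def qn (q : ℝ) (n : ℕ) : ℝ := ∑ k ∈ Finset.range n, q ^ k

theorem sum_last (q : ℝ) (n : ℕ) (A B : ℝ) :
    (∑ v : Fin (n+1), q ^ (n - (v:ℕ)) * (if v = Fin.last n then A else B)) = A + q * qn q n * B := by
  rw [Fin.sum_univ_castSucc]
  have : ∀ i : Fin n, i.castSucc ≠ Fin.last n := fun i => (Fin.castSucc_lt_last i).ne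
  simp only [this, if_false, if_true, Fin.val_castSucc, Fin.val_last, Nat.sub_self, pow_zero, one_mul]
  rw [← Finset.sum_mul, Fin.sum_univ_eq_sum_range (fun k => q ^ (n - k)) n, add_comm]
  congr 2
  rw [← Finset.sum_range_reflect, qn, Finset.mul_sum]
  refine Finset.sum_congr rfl fun k hk => ?_
  rw [Finset.mem_range] at hk
  rw [← pow_succ']
  congr 1; omega

open Classical in
noncomputable def wt (n : ℕ) (q : ℝ) (P : Equiv.Perm (Fin n) → Prop) : ℝ :=
  ∑ σ : Equiv.Perm (Fin n), if P σ then q ^ invCount n σ else 0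

theorem wt_rec {n : ℕ} (q : ℝ) (P : Equiv.Perm (Fin (n+1)) → Prop) (A B : Equiv.Perm (Fin n) → Prop)
    (h1 : ∀ τ, P (insP (Fin.last n) τ) ↔ A τ) (h2 : ∀ v τ, v ≠ Fin.last n → (P (insP v τ) ↔ B τ)) :
    wt (n+1) q P = wt n q A + q * qn q n * wt n q B := by
  rw [wt, sum_insP, ← sum_last]
  refine Finset.sum_congr rfl fun v _ => ?_
  split_ifs with hv
  · subst hv
    simp only [wt, invCount_insP, Fin.val_last, Nat.sub_self, pow_zero, one_mul, add_zero]
    refine Finset.sum_congr rfl fun τ _ => ?_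
    by_cases hA : A τ
    · rw [if_pos hA, if_pos ((h1 τ).2 hA)]
    · rw [if_neg hA, if_neg (fun h => hA ((h1 τ).1 h))]
  · simp only [wt, invCount_insP, Finset.mul_sum]
    refine Finset.sum_congr rfl fun τ _ => ?_
    by_cases hB : B τ
    · rw [if_pos hB, if_pos ((h2 v τ hv).2 hB), pow_add]; ring
    · rw [if_neg hB, if_neg (fun h => hB ((h2 v τ hv).1 h)), mul_zero]

def topIn (n M : ℕ) (σ : Equiv.Perm (Fin n)) : Prop :=
  ∃ i : Fin n, (i : ℕ) < M ∧ ∀ k, σ k ≤ σ i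

def winP (n M : ℕ) (σ : Equiv.Perm (Fin n)) : Prop :=
  ∃ j : Fin n, M ≤ (j : ℕ) ∧ (∀ k, σ k ≤ σ j) ∧
    ∀ i, i < j → ∃ k : Fin n, (k : ℕ) < M ∧ σ i ≤ σ k

theorem ex_max {n : ℕ} (σ : Equiv.Perm (Fin n)) (hn : 0 < n) : ∃ i, ∀ k, σ k ≤ σ i := by
  refine ⟨σ.symm ⟨n-1, by omega⟩, fun k => ?_⟩
  simp [Fin.le_def]; omega

theorem topIn_insP_last {n M : ℕ} (hM : M ≤ n) (τ : Equiv.Perm (Fin n)) :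
    topIn (n+1) M (insP (Fin.last n) τ) ↔ False := by
  simp only [topIn, iff_false, not_exists, not_and, not_forall]
  intro i hi
  refine ⟨Fin.last n, ?_⟩
  induction i using Fin.lastCases with
  | last => simp at hi; omega
  | cast i => simp [insP_last, insP_castSucc, Fin.castSucc_lt_last]

theorem ne_last_lt {n : ℕ} (v : Fin (n+1)) (hv : v ≠ Fin.last n) (τ : Equiv.Perm (Fin n)) (j : Fin n)
    (h : ∀ k, τ k ≤ τ j) : v ≤ v.succAbove (τ j) := by
  apply le_of_lt
  rw [Fin.lt_succAbove_iff_le_castSucc, Fin.le_def, Fin.val_castSucc]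
  have hn : (v : ℕ) < n := Fin.val_lt_last hv
  have := h (τ.symm ⟨n-1, by omega⟩)
  simp [Fin.le_def] at this
  omega

theorem max_insP {n : ℕ} (v : Fin (n+1)) (hv : v ≠ Fin.last n) (τ : Equiv.Perm (Fin n)) (j : Fin n) :
    (∀ k, insP v τ k ≤ insP v τ j.castSucc) ↔ ∀ k, τ k ≤ τ j := by
  constructor
  · intro h k
    have := h k.castSucc
    simpa [insP_castSucc] using this
  · intro h k
    induction k using Fin.lastCases with
    | last => rw [insP_last, insP_castSucc]; exact ne_last_lt v hv τ j h
    | cast k => simpa [insP_castSucc] using h k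

theorem topIn_insP {n M : ℕ} (hM : M ≤ n) (v : Fin (n+1)) (τ : Equiv.Perm (Fin n))
    (hv : v ≠ Fin.last n) : topIn (n+1) M (insP v τ) ↔ topIn n M τ := by
  constructor
  · rintro ⟨i, hi, h⟩
    induction i using Fin.lastCases with
    | last => simp at hi; omega
    | cast i => exact ⟨i, hi, (max_insP v hv τ i).1 h⟩
  · rintro ⟨i, hi, h⟩
    exact ⟨i.castSucc, hi, (max_insP v hv τ i).2 h⟩

theorem winP_insP_last {n M : ℕ} (hM1 : 1 ≤ M) (hM : M ≤ n) (τ : Equiv.Perm (Fin n)) :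
    winP (n+1) M (insP (Fin.last n) τ) ↔ topIn n M τ := by
  constructor
  · rintro ⟨j, hj, h1, h2⟩
    have hjl : j = Fin.last n := by
      have := h1 (Fin.last n)
      rw [insP_last] at this
      have h3 := le_antisymm (Fin.le_last _) this
      apply (insP (Fin.last n) τ).injective
      rw [h3, insP_last]
    subst hjl
    obtain ⟨i, hi⟩ := ex_max τ (by omega)
    obtain ⟨k, hk, h3⟩ := h2 i.castSucc (Fin.castSucc_lt_last i)
    induction k using Fin.lastCases with
    | last => simp at hk; omega
    | cast k =>
      refine ⟨k, hk, fun l => (hi l).trans ?_⟩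
      simpa [insP_castSucc] using h3
  · rintro ⟨i, hi, h⟩
    refine ⟨Fin.last n, by simpa using hM, fun k => by rw [insP_last]; exact Fin.le_last _, ?_⟩
    intro k hk
    induction k using Fin.lastCases with
    | last => simp at hk
    | cast k => exact ⟨i.castSucc, hi, by simpa [insP_castSucc] using h k⟩

theorem winP_insP {n M : ℕ} (hM : M ≤ n) (v : Fin (n+1)) (τ : Equiv.Perm (Fin n))
    (hv : v ≠ Fin.last n) : winP (n+1) M (insP v τ) ↔ winP n M τ := by
  constructor
  · rintro ⟨j, hj, h1, h2⟩
    induction j using Fin.lastCases with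
    | last =>
      obtain ⟨i, hi⟩ := ex_max τ (by have := Fin.val_lt_last hv; omega)
      have h3 := ne_last_lt v hv τ i hi
      have h4 := h1 i.castSucc
      rw [insP_last, insP_castSucc] at h4
      exact absurd (le_antisymm h4 h3) (Fin.succAbove_ne v _)
    | cast j =>
      refine ⟨j, hj, (max_insP v hv τ j).1 h1, fun i hi => ?_⟩
      obtain ⟨k, hk, h3⟩ := h2 i.castSucc (by simpa using hi)
      induction k using Fin.lastCases with
      | last => simp at hk; omega
      | cast k => exact ⟨k, hk, by simpa [insP_castSucc] using h3⟩
  · rintro ⟨j, hj, h1, h2⟩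
    refine ⟨j.castSucc, hj, (max_insP v hv τ j).2 h1, fun i hi => ?_⟩
    induction i using Fin.lastCases with
    | last => exact absurd hi (not_lt.mpr (Fin.le_last _))
    | cast i =>
      obtain ⟨k, hk, h3⟩ := h2 i (by simpa using hi)
      exact ⟨k.castSucc, hk, by simpa [insP_castSucc] using h3⟩

theorem mallowsZ_eq (n : ℕ) (q : ℝ) : mallowsZ n q = wt n q (fun _ => True) := by
  simp [wt, mallowsZ]

theorem qn_succ (q : ℝ) (n : ℕ) : qn q (n+1) = 1 + q * qn q n := by
  simp only [qn, Finset.sum_range_succ', pow_zero, pow_succ', Finset.mul_sum]; ring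

theorem mallowsZ_succ (n : ℕ) (q : ℝ) : mallowsZ (n+1) q = qn q (n+1) * mallowsZ n q := by
  simp only [mallowsZ_eq]
  rw [wt_rec q (fun _ => True) (fun _ => True) (fun _ => True) (by simp) (by simp), qn_succ]
  ring

theorem wt_false (n : ℕ) (q : ℝ) : wt n q (fun _ => False) = 0 := by simp [wt]

theorem qn_pos {q : ℝ} (hq : 0 < q) {n : ℕ} (hn : 0 < n) : 0 < qn q n :=
  Finset.sum_pos (fun k _ => pow_pos hq k) (by simpa using hn.ne')

theorem mallowsZ_pos {q : ℝ} (hq : 0 < q) (n : ℕ) : 0 < mallowsZ n q :=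
  Finset.sum_pos (fun k _ => pow_pos hq _) Finset.univ_nonempty

theorem wt_congr {n : ℕ} {q : ℝ} {P Q : Equiv.Perm (Fin n) → Prop} (h : ∀ σ, P σ ↔ Q σ) :
    wt n q P = wt n q Q := by
  have : P = Q := funext fun σ => propext (h σ)
  rw [this]

theorem N_formula {q : ℝ} (M : ℕ) (hM : 1 ≤ M) (k : ℕ) :
    qn q (M+k) * wt (M+k) q (topIn (M+k) M) = q ^ k * qn q M * mallowsZ (M+k) q := by
  induction k with
  | zero =>
    have : wt M q (topIn M M) = mallowsZ M q := by
      rw [mallowsZ_eq]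
      refine wt_congr fun σ => ?_
      simp only [topIn, Fin.is_lt, true_and, iff_true]
      exact ex_max σ hM
    simp [this]
  | succ k ih =>
    rw [← add_assoc, wt_rec q _ (fun _ => False) (topIn (M+k) M)
      (topIn_insP_last (by omega)) (fun v τ hv => topIn_insP (by omega) v τ hv), wt_false,
      mallowsZ_succ, pow_succ]
    linear_combination q * qn q (M+k+1) * ih

theorem W_formula {q : ℝ} (hq : 0 < q) (M : ℕ) (hM : 1 ≤ M) (k : ℕ) :
    q * qn q (M+k) * wt (M+k) q (winP (M+k) M) =
      q ^ k * qn q M * mallowsZ (M+k) q * ∑ i ∈ Finset.range k, 1 / qn q (M+i) := by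
  induction k with
  | zero =>
    have : wt M q (winP M M) = 0 := by
      rw [← wt_false M q]
      refine wt_congr fun σ => ?_
      simp only [winP, iff_false, not_exists]
      rintro j ⟨h, _⟩
      have := j.2
      omega
    simp [this]
  | succ k ih =>
    have hN := N_formula (q := q) M hM k
    have h0 := (qn_pos hq (show 0 < M + k by omega)).ne'
    rw [← add_assoc, wt_rec q _ (topIn (M+k) M) (winP (M+k) M)
      (winP_insP_last hM (by omega)) (fun v τ hv => winP_insP (by omega) v τ hv),
      mallowsZ_succ, pow_succ, Finset.sum_range_succ]
    have hN' : wt (M+k) q (topIn (M+k) M) = q ^ k * qn q M * mallowsZ (M+k) q * (1 / qn q (M+k)) := by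
      field_simp; linarith
    rw [hN']
    linear_combination q * qn q (M+k+1) * ih

theorem succProb_eq_wt {n M : ℕ} (hM : 1 ≤ M) (hMn : M ≤ n) (q : ℝ) :
    succProb n M q = wt n q (winP n M) / mallowsZ n q := by
  rw [succProb, mallowsProb]
  congr 1
  rw [winEvent, if_neg (by omega), Finset.sum_filter, wt]
  refine Finset.sum_congr rfl fun σ _ => ?_
  congr 1
  apply propext
  rw [winP]
  refine exists_congr fun j => and_congr_right fun hj => and_congr ?_ ?_
  · constructor
    · intro h k
      rw [Fin.le_def, h]; omega
    · intro h
      have := h (σ.symm ⟨n-1, by omega⟩)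
      simp [Fin.le_def] at this
      omega
  · constructor
    · intro h i hi
      have h1 : (σ i : ℕ) ≤ _ := Finset.le_sup (f := fun i => (σ i : ℕ))
        (show i ∈ Finset.univ.filter (fun i : Fin n => i < j) by simpa using hi)
      rw [h] at h1
      obtain ⟨k, hk, h2⟩ := Finset.exists_mem_eq_sup
        (Finset.univ.filter (fun i : Fin n => (i : ℕ) < M)) ⟨⟨0, by omega⟩, by simp; omega⟩
        (fun i => (σ i : ℕ))
      rw [h2] at h1
      exact ⟨k, by simpa using hk, h1⟩
    · intro h
      apply le_antisymm
      · refine Finset.sup_le fun i hi => ?_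
        obtain ⟨k, hk, h1⟩ := h i (by simpa using hi)
        exact le_trans h1 (Finset.le_sup (f := fun i => (σ i : ℕ)) (by simpa using hk))
      · refine Finset.sup_mono fun i hi => ?_
        simp only [Finset.mem_filter, Finset.mem_univ, true_and] at hi ⊢
        rw [Fin.lt_def]; omega

theorem succProb_zero {n : ℕ} (hn : 1 ≤ n) (q : ℝ) :
    succProb n 0 q = wt n q (topIn n 1) / mallowsZ n q := by
  rw [succProb, mallowsProb]
  congr 1
  rw [winEvent, if_pos rfl, Finset.sum_filter, wt]
  refine Finset.sum_congr rfl fun σ _ => ?_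
  congr 1
  apply propext
  rw [topIn]
  constructor
  · intro h
    refine ⟨⟨0, by omega⟩, by simp, fun k => ?_⟩
    rw [Fin.le_def, h ⟨0, by omega⟩ rfl]; omega
  · rintro ⟨i, hi, h⟩ i' hi'
    have : i' = i := by ext; omega
    subst this
    have := h (σ.symm ⟨n-1, by omega⟩)
    simp [Fin.le_def] at this
    omega

theorem succProb_formula {q : ℝ} (hq : 0 < q) (M : ℕ) (hM : 1 ≤ M) (k : ℕ) :
    succProb (M+(k+1)) M q = q ^ k * qn q M / qn q (M+(k+1)) *
      ∑ i ∈ Finset.range (k+1), 1 / qn q (M+i) := by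
  rw [succProb_eq_wt hM (by omega)]
  have h := W_formula hq M hM (k+1)
  have h0 := (qn_pos hq (show 0 < M + (k+1) by omega)).ne'
  have hZ := (mallowsZ_pos hq (M+(k+1))).ne'
  generalize ∑ i ∈ Finset.range (k+1), 1 / qn q (M+i) = S at *
  rw [div_eq_iff hZ]
  apply mul_left_cancel₀ (mul_ne_zero hq.ne' h0)
  rw [h, pow_succ]
  field_simp

theorem qn_mono {q : ℝ} (hq : 0 < q) {m n : ℕ} (h : m ≤ n) : qn q m ≤ qn q n :=
  Finset.sum_le_sum_of_subset_of_nonneg (Finset.range_mono h) (fun k _ _ => (pow_pos hq k).le)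

theorem qn_eq (q : ℝ) (n : ℕ) : (1 - q) * qn q n = 1 - q ^ n := by
  rw [qn]; exact mul_neg_geom_sum q n

theorem upper1 {q : ℝ} (hq : 0 < q) (M : ℕ) (k : ℕ) :
    succProb (M+(k+1)) M q ≤ (k+1) * q ^ k / qn q (M+(k+1)) := by
  have hn := qn_pos hq (show 0 < M + (k+1) by omega)
  rcases Nat.eq_zero_or_pos M with rfl | hM
  · rw [succProb_zero (by omega)]
    have h := N_formula (q := q) 1 le_rfl k
    rw [show 1 + k = 0 + (k+1) by omega] at h
    have hZ := (mallowsZ_pos hq (0+(k+1)))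
    rw [div_le_div_iff₀ hZ hn, mul_comm, h]
    have : qn q 1 = 1 := by simp [qn]
    rw [this, mul_one]
    gcongr
    have : 0 < q ^ k := pow_pos hq k
    nlinarith [(Nat.cast_nonneg k : (0:ℝ) ≤ k)]
  · rw [succProb_formula hq M hM]
    have hm := qn_pos hq hM
    have : ∑ i ∈ Finset.range (k+1), 1 / qn q (M+i) ≤ (k+1) * (1 / qn q M) := by
      refine (Finset.sum_le_card_nsmul _ _ (1 / qn q M) fun i _ => ?_).trans (by simp)
      exact one_div_le_one_div_of_le hm (qn_mono hq (by omega))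
    calc _ ≤ q ^ k * qn q M / qn q (M+(k+1)) * ((k+1) * (1 / qn q M)) := by gcongr
      _ = _ := by field_simp

theorem upper2 {q : ℝ} (hq : 0 < q) (hq1 : q < 1) {n M : ℕ} (h : M < n) :
    succProb n M q ≤ (Real.exp 1)⁻¹ / (q * (1 - q ^ n)) := by
  obtain ⟨k, rfl⟩ : ∃ k, n = M + (k+1) := ⟨n - M - 1, by omega⟩
  refine (upper1 hq M k).trans ?_
  have hn := qn_pos hq (show 0 < M + (k+1) by omega)
  have hx : q ^ (k+1) ≤ Real.exp (-((k+1) * (1-q))) := by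
    have h1 : q ≤ Real.exp (-(1-q)) := by
      have := Real.add_one_le_exp (-(1-q)); linarith
    calc q ^ (k+1) ≤ Real.exp (-(1-q)) ^ (k+1) := by gcongr
      _ = _ := by rw [← Real.exp_nat_mul]; push_cast; ring_nf
  have hy : ((k:ℝ)+1) * (1-q) * q ^ (k+1) ≤ (Real.exp 1)⁻¹ := by
    set x := ((k:ℝ)+1) * (1-q) with hxd
    have hx0 : 0 ≤ x := by have := sub_pos.2 hq1; positivity
    have h2 : x ≤ Real.exp (x - 1) := by have := Real.add_one_le_exp (x-1); linarith
    calc x * q ^ (k+1) ≤ Real.exp (x-1) * Real.exp (-x) := by gcongr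
      _ = _ := by rw [← Real.exp_add, ← Real.exp_neg]; congr 1; ring
  rw [← qn_eq]
  have h1q := sub_pos.2 hq1
  rw [div_le_div_iff₀ hn (by positivity)]
  calc _ = ((k:ℝ)+1) * (1-q) * q ^ (k+1) * qn q (M+(k+1)) := by ring
    _ ≤ _ := by gcongr

theorem lower1 {q : ℝ} (hq : 0 < q) (hq1 : q < 1) {n M : ℕ} (hM : 1 ≤ M) (h : M < n) :
    ((n:ℝ) - M) * (1 - q) * q ^ (n - M) * (1 - q ^ M) ≤ succProb n M q := by
  obtain ⟨k, rfl⟩ : ∃ k, n = M + (k+1) := ⟨n - M - 1, by omega⟩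
  rw [succProb_formula hq M hM, ← qn_eq]
  have h1q := sub_pos.2 hq1
  have hb : ∀ n, 0 < n → 1 - q ≤ 1 / qn q n := by
    intro n hn
    rw [le_div_iff₀ (qn_pos hq hn), qn_eq]
    have := pow_pos hq n
    linarith
  have hm := qn_pos hq hM
  have hs : ((k:ℝ)+1) * (1-q) ≤ ∑ i ∈ Finset.range (k+1), 1 / qn q (M+i) := by
    refine le_trans (by simp) (Finset.card_nsmul_le_sum _ _ (1-q) fun i _ => hb _ (by omega))
  have h3 := hb (M+(k+1)) (by omega)
  have h4 : q ^ (k+1) ≤ q ^ k := pow_le_pow_of_le_one hq.le hq1.le (by omega)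
  have h5 := qn_pos hq (show 0 < M + (k+1) by omega)
  calc _ = q ^ (k+1) * qn q M * (1-q) * (((k:ℝ)+1) * (1-q)) := by
        rw [show M + (k+1) - M = k+1 by omega]; push_cast; ring
    _ ≤ q ^ k * qn q M * (1 / qn q (M+(k+1))) * ∑ i ∈ Finset.range (k+1), 1 / qn q (M+i) := by
        gcongr
    _ = _ := by ring

theorem exp_up {q : ℝ} (hq : 0 < q) (m : ℕ) : q ^ m ≤ Real.exp (-(m * (1-q))) := by
  have h1 : q ≤ Real.exp (-(1-q)) := by
    have := Real.add_one_le_exp (-(1-q)); linarith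
  calc q ^ m ≤ Real.exp (-(1-q)) ^ m := by gcongr
    _ = _ := by rw [← Real.exp_nat_mul]; ring_nf

theorem exp_low {q : ℝ} (hq : 0 < q) (m : ℕ) : Real.exp (-(m * (1-q) / q)) ≤ q ^ m := by
  have h1 : Real.exp (-((1-q)/q)) ≤ q := by
    have := Real.add_one_le_exp ((1-q)/q)
    rw [Real.exp_neg]
    apply inv_le_of_inv_le₀ hq
    refine le_trans (le_of_eq ?_) this
    field_simp; ring
  calc _ = Real.exp (-((1-q)/q)) ^ m := by rw [← Real.exp_nat_mul]; ring_nf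
    _ ≤ _ := by gcongr

theorem succProb_nonneg {q : ℝ} (hq : 0 < q) (n M : ℕ) : 0 ≤ succProb n M q :=
  div_nonneg (Finset.sum_nonneg fun _ _ => (pow_pos hq _).le) (mallowsZ_pos hq n).le

theorem stmt_8 (c α : ℝ) (hc : 0 < c) (hα : α ∈ Set.Ioo (0 : ℝ) 1)
    (Mstar : ℕ → ℕ) (hMstar : ∀ n, 2 ≤ n → 1 ≤ Mstar n ∧ Mstar n ≤ n - 1)
    (hlim : Tendsto (fun n : ℕ => ((n : ℝ) - Mstar n) / (n : ℝ) ^ α) atTop (nhds (1 / c))) :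
    Tendsto (fun n : ℕ => succProb n (Mstar n) (1 - c / (n : ℝ) ^ α)) atTop
      (nhds (Real.exp 1)⁻¹) ∧
    ∀ M : ℕ → ℕ, (∀ n, 1 ≤ n → M n ≤ n - 1) →
      Filter.limsup (fun n : ℕ => succProb n (M n) (1 - c / (n : ℝ) ^ α)) atTop ≤
        (Real.exp 1)⁻¹ := by
  have hpow : Tendsto (fun n : ℕ => (n : ℝ) ^ α) atTop atTop :=
    (tendsto_rpow_atTop hα.1).comp tendsto_natCast_atTop_atTop
  have hx : Tendsto (fun n : ℕ => c / (n : ℝ) ^ α) atTop (nhds 0) := hpow.const_div_atTop c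
  have hqt : Tendsto (fun n : ℕ => 1 - c / (n : ℝ) ^ α) atTop (nhds 1) := by
    simpa using hx.const_sub 1
  have hq0 : ∀ᶠ n : ℕ in atTop, 0 < 1 - c / (n : ℝ) ^ α :=
    hqt.eventually (lt_mem_nhds one_pos)
  have hq1 : ∀ᶠ n : ℕ in atTop, 1 - c / (n : ℝ) ^ α < 1 := by
    filter_upwards [eventually_gt_atTop 0] with n hn
    have : (0:ℝ) < (n : ℝ) ^ α := Real.rpow_pos_of_pos (by exact_mod_cast hn) α
    have := div_pos hc this
    linarith
  have hnx : Tendsto (fun n : ℕ => (n : ℝ) * (c / (n : ℝ) ^ α)) atTop atTop := by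
    have h1 : Tendsto (fun n : ℕ => c * (n : ℝ) ^ (1 - α)) atTop atTop :=
      ((tendsto_rpow_atTop (sub_pos.2 hα.2)).comp tendsto_natCast_atTop_atTop).const_mul_atTop hc
    refine h1.congr' ?_
    filter_upwards [eventually_gt_atTop 0] with n hn
    rw [Real.rpow_sub (by exact_mod_cast hn), Real.rpow_one]
    ring
  have hexp : ∀ f : ℕ → ℝ, Tendsto f atTop atTop →
      Tendsto (fun n => 1 - Real.exp (-(f n))) atTop (nhds 1) := by
    intro f hf
    simpa using (Real.tendsto_exp_neg_atTop_nhds_zero.comp hf).const_sub 1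
  have hup : ∀ M : ℕ → ℕ, (∀ n, 2 ≤ n → M n ≤ n - 1) →
      ∀ᶠ n : ℕ in atTop, succProb n (M n) (1 - c / (n : ℝ) ^ α) ≤ (Real.exp 1)⁻¹ /
        ((1 - c / (n : ℝ) ^ α) * (1 - Real.exp (-((n : ℝ) * (c / (n : ℝ) ^ α))))) := by
    intro M hM
    filter_upwards [hq0, hq1, hnx.eventually_gt_atTop 0, eventually_ge_atTop 2] with n h0 h1 h2 h3
    have h4 := hM n h3
    refine (upper2 h0 h1 (by omega)).trans ?_
    have h5 := exp_up h0 n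
    rw [sub_sub_cancel] at h5
    have h6 : Real.exp (-((n : ℝ) * (c / (n : ℝ) ^ α))) < 1 := by
      rw [Real.exp_lt_one_iff]; linarith
    have h7 := sub_pos.2 h6
    gcongr
  have hupt : Tendsto (fun n : ℕ => (Real.exp 1)⁻¹ /
        ((1 - c / (n : ℝ) ^ α) * (1 - Real.exp (-((n : ℝ) * (c / (n : ℝ) ^ α)))))) atTop
        (nhds (Real.exp 1)⁻¹) := by
    have := (tendsto_const_nhds (x := (Real.exp 1)⁻¹)).div (hqt.mul (hexp _ hnx)) (by norm_num)
    rw [mul_one, div_one] at this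
    exact this
  constructor
  · have hk : Tendsto (fun n : ℕ => ((n : ℝ) - Mstar n) * (c / (n : ℝ) ^ α)) atTop (nhds 1) := by
      have := hlim.mul_const c
      rw [one_div_mul_cancel hc.ne'] at this
      refine this.congr fun n => ?_
      ring
    have hMx : Tendsto (fun n : ℕ => (Mstar n : ℝ) * (c / (n : ℝ) ^ α)) atTop atTop := by
      refine (hnx.atTop_add hk.neg).congr fun n => ?_
      ring
    have hlow : Tendsto (fun n : ℕ => ((n : ℝ) - Mstar n) * (c / (n : ℝ) ^ α) *
        Real.exp (-(((n : ℝ) - Mstar n) * (c / (n : ℝ) ^ α) / (1 - c / (n : ℝ) ^ α))) *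
        (1 - Real.exp (-((Mstar n : ℝ) * (c / (n : ℝ) ^ α))))) atTop (nhds (Real.exp 1)⁻¹) := by
      have h1 := (hk.div hqt one_ne_zero).neg.rexp
      have := (hk.mul h1).mul (hexp _ hMx)
      simpa [Real.exp_neg] using this
    refine tendsto_of_tendsto_of_tendsto_of_le_of_le' hlow hupt ?_
      (hup Mstar fun n hn => (hMstar n hn).2)
    filter_upwards [hq0, hq1, hMx.eventually_gt_atTop 0, eventually_ge_atTop 2] with n h0 h1 h2 h3
    obtain ⟨h4, h4'⟩ := hMstar n h3
    have hlt : Mstar n < n := by omega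
    refine le_trans ?_ (lower1 h0 h1 h4 hlt)
    have h5 := exp_up h0 (Mstar n)
    have h8 := exp_low h0 (n - Mstar n)
    rw [Nat.cast_sub hlt.le, sub_sub_cancel] at h8
    rw [sub_sub_cancel] at h5 ⊢
    have h6 : Real.exp (-((Mstar n : ℝ) * (c / (n : ℝ) ^ α))) < 1 := by
      rw [Real.exp_lt_one_iff]; linarith
    have h7 := sub_pos.2 h6
    have h9 : (0:ℝ) ≤ (n : ℝ) - Mstar n := sub_nonneg.2 (by exact_mod_cast hlt.le)
    have h10 : 0 < c / (n : ℝ) ^ α := by linarith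
    gcongr
  · intro M hM
    rw [← hupt.limsup_eq]
    refine limsup_le_limsup (hup M fun n hn => hM n (by omega)) ?_ hupt.isBoundedUnder_le
    refine IsBoundedUnder.isCoboundedUnder_le ⟨0, ?_⟩
    rw [eventually_map]
    filter_upwards [hq0] with n h0
    exact succProb_nonneg h0 _ _
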